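/- arXiv:0812.1318 — 3 statements merged into one kernel-verified Lean document; each statement's English description precedes it below -/
import Mathlib

section
/- Fix an integer k ≥ 0, set k̄ = k+2, and fix l ∈ {0,1} and d ∈ ℤ, determining the simple current j = (J^l 0, d). Define the action of j on Q_k by j·(a,c) = (J^{l+(lk+d)(a+c)} a, c + d + (lk+d)(a+c)·k̄), where J^m a = a if m is even and J^m a = k−a if m is odd. Then for all (a,c), (a',c') ∈ Q_k (with integer representatives c, c'): S_{j·(a,c); a',c'} = exp(2πi·Q_j(a',c'))·S_{a,c;a',c'}, where Q_j(a',c') = a'·l/2 + c'·d/(2k̄) − [kl+d]·[a'+c']/4. -/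
/-- Parity `[x] ∈ {0,1}` of an integer. -/
def par (x : ℤ) : ℤ := x % 2

/-- `J^m a`: the m-fold action of the su(2) simple current `J : a ↦ k - a`. -/
def Jpow (k m a : ℤ) : ℤ := if m % 2 = 0 then a else k - a

/-- The level-`k` su(2) S-matrix. -/
noncomputable def Ssu2 (k : ℕ) (a a' : ℤ) : ℂ :=
  ((Real.sqrt (2 / ((k : ℝ) + 2)) *
      Real.sin (Real.pi * ((a : ℝ) + 1) * ((a' : ℝ) + 1) / ((k : ℝ) + 2)) : ℝ) : ℂ)

/-- The level-`l` u(1) S-matrix. -/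
noncomputable def Su1 (l : ℕ) (c c' : ℤ) : ℂ :=
  ((1 / Real.sqrt (2 * (l : ℝ)) : ℝ) : ℂ) *
    Complex.exp (-(Real.pi : ℂ) * Complex.I * (c : ℂ) * (c' : ℂ) / (l : ℂ))

/-- The N=2 minimal model S-matrix at level `k`. -/
noncomputable def Smin (k : ℕ) (a c a' c' : ℤ) : ℂ :=
  2 * Ssu2 k a a' * Su1 2 (par (a + c)) (par (a' + c')) *
    (starRingEnd ℂ) (Su1 (k + 2) c c')

/-!
Put `s = lk + d` and `n = a + c`. The su(2) factor acquires the sign `(-1)^((l + s n) a')`. Since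
`J^m a ≡ a + m k` modulo 2, the parity label `[n]` becomes `[n + s]`, so expanding
`[n + s] = [n] + [s] - 2 [n] [s]` shows that the level-2 factor acquires `(-1)^(s n (a' + c'))`
together with `exp(-πi [s] [a' + c'] / 2)`. The level-`(k + 2)` factor acquires `(-1)^(s n c')`
together with `exp(πi d c' / (k + 2))`. The signs multiply to `(-1)^(l a')`.
-/

theorem even_par_iff (x : ℤ) : Even (par x) ↔ Even x := by
  simp only [par, Int.even_iff, Int.emod_emod_of_dvd x (dvd_refl 2)]

theorem par_add (x y : ℤ) : par (x + y) = par x + par y + -(par x * par y) * 2 := by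
  unfold par
  rcases Int.emod_two_eq_zero_or_one x with hx | hx <;>
    rcases Int.emod_two_eq_zero_or_one y with hy | hy <;> rw [hx, hy] <;> omega

theorem neg_one_zpow_congr {K : Type*} [DivisionRing K] {x y : ℤ} (h : Even x ↔ Even y) :
    (-1 : K) ^ x = (-1) ^ y := by
  simp only [neg_one_zpow_eq_ite, h]

theorem exp_int_mul_pi_mul_I (n : ℤ) : Complex.exp (n * (Real.pi * Complex.I)) = (-1) ^ n := by
  rw [Complex.exp_int_mul, Complex.exp_pi_mul_I]

theorem Jpow_modEq_two (k m a : ℤ) : Jpow k m a ≡ a + m * k [ZMOD 2] := by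
  unfold Jpow
  split_ifs with hm
  · obtain ⟨r, rfl⟩ := Int.dvd_of_emod_eq_zero hm
    exact Int.modEq_iff_dvd.mpr ⟨r * k, by ring⟩
  · obtain ⟨r, rfl⟩ : Odd m := Int.odd_iff.mpr (by omega)
    exact Int.modEq_iff_dvd.mpr ⟨a + r * k, by ring⟩

theorem par_Jpow_add (k l d r a c : ℤ) :
    par (Jpow k (l + r) a + (c + d + r * (k + 2))) = par ((k * l + d) + (a + c)) := by
  refine ((Jpow_modEq_two _ _ _).add_right _).trans (Int.modEq_iff_dvd.mpr ?_)
  exact ⟨-(r * (k + 1)), by ring⟩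

theorem Ssu2_sub_left (k : ℕ) (a a' : ℤ) : Ssu2 k (k - a) a' = (-1) ^ a' * Ssu2 k a a' := by
  have hangle : Real.pi * (((k - a : ℤ) : ℝ) + 1) * ((a' : ℝ) + 1) / ((k : ℝ) + 2) =
      ((a' + 1 : ℤ) : ℝ) * Real.pi -
        Real.pi * ((a : ℝ) + 1) * ((a' : ℝ) + 1) / ((k : ℝ) + 2) := by
    push_cast
    field_simp
    ring
  unfold Ssu2
  rw [hangle, Real.sin_int_mul_pi_sub, zpow_add₀ (by norm_num), zpow_one]
  push_cast
  ring

theorem Ssu2_Jpow (k : ℕ) (m a a' : ℤ) :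
    Ssu2 k (Jpow k m a) a' = (-1) ^ (m * a') * Ssu2 k a a' := by
  unfold Jpow
  split_ifs with hm
  · rw [((Int.even_iff.mpr hm).mul_right a').neg_one_zpow, one_mul]
  · have hodd : Odd m := Int.odd_iff.mpr (by omega)
    rw [Ssu2_sub_left, zpow_mul, hodd.neg_one_zpow]

theorem conj_Su1 (l : ℕ) (c c' : ℤ) : starRingEnd ℂ (Su1 l c c') = Su1 l (-c) c' := by
  simp [Su1, ← Complex.exp_conj]

theorem Su1_add_left (l : ℕ) (b c c' : ℤ) :
    Su1 l (b + c) c' = Complex.exp (-Real.pi * Complex.I * b * c' / l) * Su1 l c c' := by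
  unfold Su1
  rw [mul_left_comm, ← Complex.exp_add]
  push_cast
  ring_nf

theorem Su1_add_mul_level {l : ℕ} (hl : l ≠ 0) (c n c' : ℤ) :
    Su1 l (c + n * l) c' = (-1) ^ (n * c') * Su1 l c c' := by
  have hl' : (l : ℂ) ≠ 0 := Nat.cast_ne_zero.mpr hl
  have hangle : -Real.pi * Complex.I * ((n * l : ℤ) : ℂ) * c' / l =
      ((-(n * c') : ℤ) : ℂ) * (Real.pi * Complex.I) := by
    push_cast
    field_simp
  rw [add_comm, Su1_add_left, hangle, exp_int_mul_pi_mul_I, neg_one_zpow_congr even_neg]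

theorem Su1_two_par_add (x y z : ℤ) :
    Su1 2 (par (x + y)) (par z) =
      (-1) ^ (x * y * z) * Complex.exp (-Real.pi * Complex.I * par x * par z / 2) *
        Su1 2 (par y) (par z) := by
  have hparity : Even (-(par x * par y) * par z) ↔ Even (x * y * z) := by
    simp only [Int.even_mul, even_neg, even_par_iff]
  have hlevel := Su1_add_mul_level two_ne_zero (par x + par y) (-(par x * par y)) (par z)
  rw [Nat.cast_ofNat] at hlevel
  rw [par_add, hlevel, neg_one_zpow_congr hparity, Su1_add_left, Nat.cast_ofNat, ← mul_assoc]

theorem conj_Su1_add_add_mul_level (k : ℕ) (c d n c' : ℤ) :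
    starRingEnd ℂ (Su1 (k + 2) (c + d + n * (k + 2)) c') =
      (-1) ^ (n * c') * Complex.exp (Real.pi * Complex.I * d * c' / (k + 2)) *
        starRingEnd ℂ (Su1 (k + 2) c c') := by
  have hneg : -(c + d + n * ((k : ℤ) + 2)) = (-d + -c) + -n * ((k + 2 : ℕ) : ℤ) := by
    push_cast
    ring
  have hparity : Even (-n * c') ↔ Even (n * c') := by simp only [neg_mul, even_neg]
  rw [conj_Su1, conj_Su1, hneg, Su1_add_mul_level (by omega), Su1_add_left,
    neg_one_zpow_congr hparity, mul_assoc]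
  push_cast
  ring_nf

theorem neg_one_zpow_add_mul_cancel {K : Type*} [DivisionRing K] (l m a' c' : ℤ) :
    (-1 : K) ^ ((l + m) * a') * (-1) ^ (m * (a' + c')) * (-1) ^ (m * c') = (-1) ^ (l * a') := by
  have hne : (-1 : K) ≠ 0 := neg_ne_zero.mpr one_ne_zero
  rw [← zpow_add₀ hne, ← zpow_add₀ hne]
  apply neg_one_zpow_congr
  simp only [Int.even_add, Int.even_mul]
  tauto

theorem exp_simple_current_charge (k : ℕ) (l a' : ℤ) (d c' s q : ℂ) :
    Complex.exp (2 * Real.pi * Complex.I *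
        ((a' * l) / 2 + (c' * d) / (2 * ((k : ℂ) + 2)) - (s * q) / 4)) =
      (-1) ^ (l * a') * Complex.exp (-Real.pi * Complex.I * s * q / 2) *
        Complex.exp (Real.pi * Complex.I * d * c' / (k + 2)) := by
  have hk : (k : ℂ) + 2 ≠ 0 := by exact_mod_cast (by omega : k + 2 ≠ 0)
  rw [← exp_int_mul_pi_mul_I, ← Complex.exp_add, ← Complex.exp_add]
  congr 1
  push_cast
  field_simp
  ring

theorem simple_current_action_on_S_general (k : ℕ) (l d a a' c c' : ℤ) :
    Smin k (Jpow k (l + (l * k + d) * (a + c)) a)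
        (c + d + (l * k + d) * (a + c) * (k + 2)) a' c' =
      Complex.exp (2 * Real.pi * Complex.I *
          ((a' * l) / 2 + (c' * d) / (2 * ((k : ℂ) + 2)) -
            (par (k * l + d) * par (a' + c')) / 4)) *
        Smin k a c a' c' := by
  have hsign := neg_one_zpow_add_mul_cancel (K := ℂ) l ((l * k + d) * (a + c)) a' c'
  unfold Smin
  rw [Ssu2_Jpow, par_Jpow_add, Su1_two_par_add, conj_Su1_add_add_mul_level,
    exp_simple_current_charge, ← hsign, mul_comm (k : ℤ) l]
  ring

/-- the S-matrix transforms with a phase `exp(2πi Q_j(a',c'))` under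
the action of the simple current `j = (J^l 0, d)` on the left index. -/
theorem simple_current_action_on_S (k : ℕ) (l : ℤ) (hl : l = 0 ∨ l = 1) (d : ℤ)
    (a a' : ℕ) (ha : a ≤ k) (ha' : a' ≤ k) (c c' : ℤ) :
    Smin k (Jpow (k : ℤ) (l + (l * (k : ℤ) + d) * ((a : ℤ) + c)) (a : ℤ))
        (c + d + (l * (k : ℤ) + d) * ((a : ℤ) + c) * ((k : ℤ) + 2)) (a' : ℤ) c'
      = Complex.exp ((2 : ℂ) * (Real.pi : ℂ) * Complex.I *
          (((a' : ℂ) * (l : ℂ)) / 2 + ((c' : ℂ) * (d : ℂ)) / (2 * ((k : ℂ) + 2))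
            - ((par ((k : ℤ) * l + d) : ℂ) * (par ((a' : ℤ) + c') : ℂ)) / 4))
        * Smin k (a : ℤ) c (a' : ℤ) c' := by
  exact_mod_cast simple_current_action_on_S_general k l d a a' c c'
end

section
/- Fix an integer k ≥ 0, set k̄ = k+2, and define 𝐣(a,c) = (k−a, c+k̄) on Q_k. Let M : Q_k × Q_k → ℂ be a matrix satisfying M = S·M·S^†, where S is the N=2 minimal model S-matrix. Then for all m, n ∈ {0,1} and all (r,s), (t,u) ∈ Q_k: Σ_{(a,c)∈Q_k} Σ_{(a',c')∈Q_k} S_{r,s;a,c}·M_{𝐣^n(a,c); a',c'}·conj(S_{a',c';t,u})·(−1)^{(a+c+n)m} = (−1)^{(r+s+m)n}·M_{𝐣^m(r,s); t,u}. -/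
open Matrix

/-- The index set `Q_k = {0,…,k} × ℤ/(2k̄)ℤ` of the level-`k` N=2 minimal model. -/
abbrev Qk (k : ℕ) := Fin (k + 1) × ZMod (2 * (k + 2))

/-- The N=2 minimal model S-matrix as a matrix on `Q_k`. -/
noncomputable def Smat (k : ℕ) : Matrix (Qk k) (Qk k) ℂ := fun p q =>
  Smin k ((p.1 : ℕ) : ℤ) ((p.2.val : ℕ) : ℤ) ((q.1 : ℕ) : ℤ) ((q.2.val : ℕ) : ℤ)

/-- The simple current `𝐣(a,c) = (k-a, c+k̄)` acting on `Q_k`. -/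
def jmap (k : ℕ) (p : Qk k) : Qk k :=
  (⟨k - (p.1 : ℕ), Nat.lt_succ_of_le (Nat.sub_le _ _)⟩,
    p.2 + ((k + 2 : ℕ) : ZMod (2 * (k + 2))))

/-!
Let `D` be the diagonal matrix of the signs `(-1)^(a+c)` and `J` the permutation matrix of `𝐣`.
Conjugation by `S` exchanges the two, `S J = D S` and `S D = J S`, and `D` commutes with `J`.
The twisted, sign-decorated matrix is `(-1)^(mn) D^m J^n M`, and moving `S` past `D^m J^n` gives
`J^m D^n = D^n J^m`: the roles of `m` and `n` are swapped.
-/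

lemma Ssu2_comm (k : ℕ) (a a' : ℤ) : Ssu2 k a a' = Ssu2 k a' a := by
  unfold Ssu2
  rw [mul_right_comm Real.pi]

lemma Su1_comm (l : ℕ) (c c' : ℤ) : Su1 l c c' = Su1 l c' c := by
  unfold Su1
  rw [mul_right_comm (-(Real.pi : ℂ) * Complex.I)]

lemma Smin_comm (k : ℕ) (a c a' c' : ℤ) : Smin k a c a' c' = Smin k a' c' a c := by
  unfold Smin
  rw [Ssu2_comm, Su1_comm 2, Su1_comm (k + 2)]

lemma Ssu2_level_sub (k : ℕ) (a a' : ℤ) : Ssu2 k a (k - a') = (-1) ^ a * Ssu2 k a a' := by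
  have reflect_angle : Real.pi * ((a : ℝ) + 1) * (((k - a' : ℤ) : ℝ) + 1) / ((k : ℝ) + 2) =
      ((a + 1 : ℤ) : ℝ) * Real.pi -
        Real.pi * ((a : ℝ) + 1) * ((a' : ℝ) + 1) / ((k : ℝ) + 2) := by
    push_cast
    field_simp
    ring
  unfold Ssu2
  rw [reflect_angle, Real.sin_int_mul_pi_sub, zpow_add_one₀ (by norm_num)]
  push_cast
  ring

lemma Su1_add_mul {l : ℕ} (hl : l ≠ 0) (c c' z : ℤ) :
    Su1 l c (c' + l * z) = (-1) ^ (c * z) * Su1 l c c' := by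
  have exp_neg_pi_mul_I : Complex.exp (-(Real.pi * Complex.I)) = -1 := by
    rw [Complex.exp_neg, Complex.exp_pi_mul_I, inv_neg_one]
  have hl' : (l : ℂ) ≠ 0 := Nat.cast_ne_zero.mpr hl
  unfold Su1
  rw [← exp_neg_pi_mul_I, ← Complex.exp_int_mul, mul_left_comm, ← Complex.exp_add]
  congr 2
  push_cast
  field_simp
  ring

lemma par_simpleCurrent (k a c w : ℤ) :
    par (k - a + (c + (k + 2) * (2 * w + 1))) = par (a + c) := by
  refine Int.ModEq.symm (Int.modEq_iff_dvd.mpr ⟨k + 1 - a + (k + 2) * w, ?_⟩)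
  ring

lemma Smin_simpleCurrent (k : ℕ) (a c a' c' w : ℤ) :
    Smin k a c (k - a') (c' + (k + 2) * (2 * w + 1)) = (-1) ^ (a + c) * Smin k a c a' c' := by
  have u1_shift : Su1 (k + 2) c (c' + (k + 2) * (2 * w + 1)) = (-1) ^ c * Su1 (k + 2) c c' := by
    have odd_shift : (-1 : ℂ) ^ (c * (2 * w + 1)) = (-1) ^ c := by
      rw [mul_comm, _root_.zpow_mul, Odd.neg_one_zpow (odd_two_mul_add_one w)]
    rw [← odd_shift, ← Su1_add_mul (by positivity)]
    norm_cast
  unfold Smin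
  rw [Ssu2_level_sub, u1_shift, par_simpleCurrent, zpow_add₀ (by norm_num)]
  simp only [map_mul, map_zpow₀, map_neg, map_one]
  ring

lemma Smat_isSymm (k : ℕ) : (Smat k).IsSymm :=
  Matrix.IsSymm.ext fun _ _ => Smin_comm k _ _ _ _

lemma jmap_involutive (k : ℕ) : Function.Involutive (jmap k) := by
  rintro ⟨a, c⟩
  have two_mul_shift : ((k + 2 : ℕ) : ZMod (2 * (k + 2))) + (k + 2 : ℕ) = 0 := by
    rw [← two_mul]
    exact_mod_cast ZMod.natCast_self (2 * (k + 2))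
  refine Prod.ext (Fin.ext (Nat.sub_sub_self a.is_le)) ?_
  change c + _ + _ = c
  rw [add_assoc, two_mul_shift, add_zero]

lemma jmap_fst (k : ℕ) (p : Qk k) : (((jmap k p).1 : ℕ) : ℤ) = k - (p.1 : ℕ) :=
  Nat.cast_sub p.1.is_le

lemma exists_jmap_snd_val (k : ℕ) [NeZero (2 * (k + 2))] (p : Qk k) :
    ∃ w : ℤ, ((jmap k p).2.val : ℤ) = p.2.val + (k + 2) * (2 * w + 1) := by
  have congr_shift : ((p.2.val + (k + 2) : ℤ) : ZMod (2 * (k + 2))) =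
      ((jmap k p).2.val : ℤ) := by
    simp [jmap]
  obtain ⟨w, hw⟩ := (ZMod.intCast_eq_intCast_iff_dvd_sub _ _ _).mp congr_shift
  refine ⟨w, ?_⟩
  push_cast at hw
  linear_combination hw

/-- The sign `(-1)^(a+c)` of `(a,c)`, computed from the representative of `c` in `[0, 2k̄)`. -/
noncomputable def chargeSign (k : ℕ) (p : Qk k) : ℂ :=
  (-1) ^ ((p.1 : ℕ) + p.2.val)

lemma chargeSign_jmap (k : ℕ) [NeZero (2 * (k + 2))] (p : Qk k) :
    chargeSign k (jmap k p) = chargeSign k p := by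
  obtain ⟨w, hw⟩ := exists_jmap_snd_val k p
  have par_eq := par_simpleCurrent k (p.1 : ℕ) p.2.val w
  rw [← jmap_fst, ← hw] at par_eq
  unfold par at par_eq
  refine neg_one_pow_congr ?_
  simp only [Nat.even_iff]
  omega

lemma Smat_apply_jmap (k : ℕ) [NeZero (2 * (k + 2))] (p q : Qk k) :
    Smat k p (jmap k q) = chargeSign k p * Smat k p q := by
  obtain ⟨w, hw⟩ := exists_jmap_snd_val k q
  unfold Smat chargeSign
  rw [jmap_fst, hw, Smin_simpleCurrent]
  norm_cast

/-- The diagonal matrix `D` of the signs `(-1)^(a+c)`. -/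
noncomputable def chargeMatrix (k : ℕ) : Matrix (Qk k) (Qk k) ℂ :=
  diagonal (chargeSign k)

/-- The permutation matrix `J` of `𝐣`; left multiplication by it replaces each row index by its
image under `𝐣`. -/
noncomputable def currentMatrix (k : ℕ) : Matrix (Qk k) (Qk k) ℂ :=
  (jmap_involutive k).toPerm.permMatrix ℂ

section SimpleCurrent

variable (k : ℕ) [NeZero (2 * (k + 2))]

lemma currentMatrix_mul {ι : Type*} (M : Matrix (Qk k) ι ℂ) :
    currentMatrix k * M = M.submatrix (jmap k) id :=
  PEquiv.toMatrix_toPEquiv_mul _ _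

lemma mul_currentMatrix {ι : Type*} (M : Matrix ι (Qk k) ℂ) :
    M * currentMatrix k = M.submatrix id (jmap k) :=
  PEquiv.mul_toMatrix_toPEquiv _ _

lemma currentMatrix_pow_mul_apply {ι : Type*} (n : ℕ) (M : Matrix (Qk k) ι ℂ) (p : Qk k) (q : ι) :
    (currentMatrix k ^ n * M) p q = M ((jmap k)^[n] p) q := by
  induction n generalizing p with
  | zero => rw [pow_zero, Matrix.one_mul, Function.iterate_zero_apply]
  | succ n ih =>
    rw [pow_succ', Matrix.mul_assoc, currentMatrix_mul, submatrix_apply, id, ih,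
      Function.iterate_succ_apply]

lemma commute_chargeMatrix_currentMatrix : Commute (chargeMatrix k) (currentMatrix k) := by
  change chargeMatrix k * currentMatrix k = currentMatrix k * chargeMatrix k
  rw [mul_currentMatrix, currentMatrix_mul]
  ext p q
  have jmap_eq_iff : jmap k p = q ↔ p = jmap k q := (jmap_involutive k).eq_iff
  simp only [chargeMatrix, submatrix_apply, id, diagonal_apply, jmap_eq_iff, chargeSign_jmap]

lemma semiconjBy_Smat_currentMatrix_chargeMatrix :
    SemiconjBy (Smat k) (currentMatrix k) (chargeMatrix k) := by
  change Smat k * currentMatrix k = chargeMatrix k * Smat k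
  ext p q
  rw [mul_currentMatrix, submatrix_apply, id, Smat_apply_jmap, chargeMatrix, diagonal_mul]

lemma semiconjBy_Smat_chargeMatrix_currentMatrix :
    SemiconjBy (Smat k) (chargeMatrix k) (currentMatrix k) := by
  change Smat k * chargeMatrix k = currentMatrix k * Smat k
  ext p q
  rw [currentMatrix_mul, submatrix_apply, id, ← (Smat_isSymm k).apply, Smat_apply_jmap,
    (Smat_isSymm k).apply, chargeMatrix, mul_diagonal, mul_comm]

/-- The matrix `(-1)^((a+c+n)m) M_{𝐣^n(a,c);·}`, written as `(-1)^(mn) D^m J^n M`. -/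
noncomputable def twistedBox {ι : Type*} (m n : ℕ) (M : Matrix (Qk k) ι ℂ) : Matrix (Qk k) ι ℂ :=
  (-1 : ℂ) ^ (m * n) • (chargeMatrix k ^ m * currentMatrix k ^ n * M)

lemma twistedBox_apply {ι : Type*} (m n : ℕ) (M : Matrix (Qk k) ι ℂ) (p : Qk k) (q : ι) :
    twistedBox k m n M p q =
      (-1) ^ (((p.1 : ℕ) + p.2.val + n) * m) * M ((jmap k)^[n] p) q := by
  rw [twistedBox, Matrix.mul_assoc, Matrix.smul_apply, chargeMatrix, diagonal_pow, diagonal_mul,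
    currentMatrix_pow_mul_apply, Pi.pow_apply, chargeSign, smul_eq_mul]
  ring

lemma twistedBox_mul {ι κ : Type*} [Fintype ι] (m n : ℕ) (M : Matrix (Qk k) ι ℂ)
    (N : Matrix ι κ ℂ) : twistedBox k m n M * N = twistedBox k m n (M * N) := by
  simp only [twistedBox, Matrix.smul_mul, Matrix.mul_assoc]

theorem Smat_mul_twistedBox {ι : Type*} (m n : ℕ) (M : Matrix (Qk k) ι ℂ) :
    Smat k * twistedBox k m n M = twistedBox k n m (Smat k * M) := by
  have swap : Smat k * (chargeMatrix k ^ m * currentMatrix k ^ n) =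
      currentMatrix k ^ m * chargeMatrix k ^ n * Smat k :=
    ((semiconjBy_Smat_chargeMatrix_currentMatrix k).pow_right m).mul_right
      ((semiconjBy_Smat_currentMatrix_chargeMatrix k).pow_right n)
  have comm : currentMatrix k ^ m * chargeMatrix k ^ n =
      chargeMatrix k ^ n * currentMatrix k ^ m :=
    ((commute_chargeMatrix_currentMatrix k).pow_pow n m).symm
  rw [twistedBox, twistedBox, Matrix.mul_smul, ← Matrix.mul_assoc, swap, comm, Matrix.mul_assoc,
    mul_comm m n]

end SimpleCurrent

theorem S_transform_of_twisted_box_general (k : ℕ) [NeZero (2 * (k + 2))]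
    (M : Matrix (Qk k) (Qk k) ℂ) (m n : ℕ) (x y : Qk k) :
    (∑ p : Qk k, ∑ q : Qk k,
        Smat k x p * M ((jmap k)^[n] p) q * (starRingEnd ℂ) (Smat k q y) *
          (-1 : ℂ) ^ (((p.1 : ℕ) + p.2.val + n) * m))
      = (-1 : ℂ) ^ (((x.1 : ℕ) + x.2.val + m) * n) *
          (Smat k * M * (Smat k)ᴴ) ((jmap k)^[m] x) y := by
  rw [← twistedBox_apply, Matrix.mul_assoc, ← Smat_mul_twistedBox, ← twistedBox_mul]
  simp only [mul_apply, Finset.mul_sum, twistedBox_apply, conjTranspose_apply]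
  refine Finset.sum_congr rfl fun p _ => Finset.sum_congr rfl fun q _ => ?_
  rw [(Smat_isSymm k).apply y q, starRingEnd_apply]
  ring

/-- for an S-invariant matrix `M`, conjugating the `𝐣^n`-twisted
and sign-decorated matrix by `S` yields the `𝐣^m`-twisted, sign-decorated matrix. -/
theorem S_transform_of_twisted_box (k : ℕ) [NeZero (2 * (k + 2))]
    (M : Matrix (Qk k) (Qk k) ℂ) (hM : M = Smat k * M * (Smat k)ᴴ)
    (m n : ℕ) (hm : m ≤ 1) (hn : n ≤ 1)
    (r t : Fin (k + 1)) (s u : ZMod (2 * (k + 2))) :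
    (∑ p : Qk k, ∑ q : Qk k,
        Smat k (r, s) p * M ((jmap k)^[n] p) q * (starRingEnd ℂ) (Smat k q (t, u)) *
          (-1 : ℂ) ^ (((p.1 : ℕ) + p.2.val + n) * m))
      = (-1 : ℂ) ^ (((r : ℕ) + s.val + m) * n) * M ((jmap k)^[m] (r, s)) (t, u) := by
  rw [S_transform_of_twisted_box_general, ← hM]
end

section
/- Let k be a positive integer with 8 ∣ k+4 and set k̄ = k+2. Then the number of quadruples (v,z,n,m) of integers with 1 ≤ v ≤ k̄/2, 2v ∣ k̄, k̄ ∣ 2v², 1 ≤ z ≤ 2v²/k̄, (2v²/k̄) ∣ (z²−1), and n, m ∈ {0,1}, equals 2·d(k̄), where d(m) denotes the number of positive divisors of m. -/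
/-! Write `k + 2 = 2 * N` with `N` odd. A coprime factorization `w = x * y` of an odd `w`
corresponds to the square root `z` of `1` modulo `w` with `z ≡ 1 [MOD x]` and `z ≡ -1 [MOD y]`.
Writing `N = a ^ 2 * w` and `v = a * w`, the roots `z` attached to `v` thus correspond to the
factorizations `N = (a * x) * (a * y)` of least common multiple `v`, so that the pairs `(v, z)`
correspond to all factorizations of `N`, that is, to its divisors. -/

open Finset

/-- The square roots of `1` modulo `w`, represented by residues in `[1, w]`. Since `z` is positive,
the truncated difference `z ^ 2 - 1` is the true one. -/
def sqrtsOfOne (w : ℕ) : Finset ℕ := {z ∈ Icc 1 w | w ∣ z ^ 2 - 1}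

/-- The ordered factorizations `w = x * y` into coprime factors, which match the square roots
of `1` modulo an odd `w`. There are none for `w = 0`. -/
def coprimeFactorizations (w : ℕ) : Finset (ℕ × ℕ) :=
  {p ∈ w.divisorsAntidiagonal | p.1.Coprime p.2}

/-- The divisors `v` of `N` with `N ∣ v ^ 2`. For `N = (k + 2) / 2` these are the values of the
parameter `v` of an invariant `M^{4,0}[v,z,n,m]`. -/
def sqMultipleDivisors (N : ℕ) : Finset ℕ := {v ∈ N.divisors | N ∣ v ^ 2}

theorem mem_sqrtsOfOne {w z : ℕ} : z ∈ sqrtsOfOne w ↔ (1 ≤ z ∧ z ≤ w) ∧ w ∣ z ^ 2 - 1 := by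
  rw [sqrtsOfOne, mem_filter, mem_Icc]

theorem mem_sqrtsOfOne_iff_exists_succ {w z : ℕ} :
    z ∈ sqrtsOfOne w ↔ ∃ t < w, w ∣ t * (t + 2) ∧ z = t + 1 := by
  have hsq (t : ℕ) : (t + 1) ^ 2 - 1 = t * (t + 2) := Nat.sub_eq_of_eq_add (by ring)
  rw [mem_sqrtsOfOne]
  constructor
  · rintro ⟨⟨hz, hzw⟩, hdvd⟩
    obtain ⟨t, rfl⟩ := Nat.exists_eq_add_of_le' hz
    exact ⟨t, hzw, hsq t ▸ hdvd, rfl⟩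
  · rintro ⟨t, hlt, hdvd, rfl⟩
    exact ⟨⟨t.succ_pos, hlt⟩, (hsq t).symm ▸ hdvd⟩

theorem mem_coprimeFactorizations {w : ℕ} {p : ℕ × ℕ} :
    p ∈ coprimeFactorizations w ↔ (p.1 * p.2 = w ∧ w ≠ 0) ∧ p.1.Coprime p.2 := by
  rw [coprimeFactorizations, mem_filter, Nat.mem_divisorsAntidiagonal]

theorem mem_sqMultipleDivisors {N v : ℕ} :
    v ∈ sqMultipleDivisors N ↔ (v ∣ N ∧ N ≠ 0) ∧ N ∣ v ^ 2 := by
  rw [sqMultipleDivisors, mem_filter, Nat.mem_divisors]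

theorem mem_sqMultipleDivisors_iff_le {N v : ℕ} :
    v ∈ sqMultipleDivisors N ↔ 1 ≤ v ∧ v ≤ N ∧ v ∣ N ∧ N ∣ v ^ 2 := by
  rw [mem_sqMultipleDivisors]
  constructor
  · rintro ⟨⟨hdvd, hN⟩, hsq⟩
    have hpos := Nat.pos_of_ne_zero hN
    exact ⟨Nat.pos_of_dvd_of_pos hdvd hpos, Nat.le_of_dvd hpos hdvd, hdvd, hsq⟩
  · rintro ⟨hv, hvN, hdvd, hsq⟩
    exact ⟨⟨hdvd, Nat.ne_zero_of_lt (hv.trans hvN)⟩, hsq⟩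

theorem gcd_mul_gcd_of_dvd_mul {m a b : ℕ} (h : m ∣ a * b)
    (hc : (m.gcd a).Coprime (m.gcd b)) : m.gcd a * m.gcd b = m :=
  Nat.dvd_antisymm (hc.mul_dvd_of_dvd_of_dvd (m.gcd_dvd_left a) (m.gcd_dvd_left b))
    ((Nat.dvd_gcd dvd_rfl h).trans (Nat.gcd_mul_right_dvd_mul_gcd m a b))

theorem coprime_gcd_gcd_add_two {w : ℕ} (hw : Odd w) (t : ℕ) :
    (w.gcd t).Coprime (w.gcd (t + 2)) := by
  refine Nat.eq_one_of_dvd_coprimes hw.coprime_two_left ?_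
    ((Nat.gcd_dvd_left _ _).trans (w.gcd_dvd_left t))
  exact (Nat.dvd_add_right ((Nat.gcd_dvd_left _ _).trans (w.gcd_dvd_right t))).1
    ((Nat.gcd_dvd_right _ _).trans (w.gcd_dvd_right (t + 2)))

theorem gcd_eq_of_dvd_of_dvd_add_two {x y t : ℕ} (hodd : Odd (x * y)) (hx : x ∣ t)
    (hy : y ∣ t + 2) : (x * y).gcd t = x ∧ (x * y).gcd (t + 2) = y := by
  have hc := coprime_gcd_gcd_add_two hodd t
  have hxg : x ∣ (x * y).gcd t := Nat.dvd_gcd (Nat.dvd_mul_right x y) hx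
  have hyg : y ∣ (x * y).gcd (t + 2) := Nat.dvd_gcd (Nat.dvd_mul_left y x) hy
  have hgx := (hc.coprime_dvd_right hyg).dvd_of_dvd_mul_right (Nat.gcd_dvd_left _ _)
  have hgy := (hc.symm.coprime_dvd_right hxg).dvd_of_dvd_mul_left (Nat.gcd_dvd_left _ _)
  exact ⟨hgx.antisymm hxg, hgy.antisymm hyg⟩

theorem eq_of_dvd_of_dvd_add_two {x y t t' : ℕ} (hc : x.Coprime y) (ht : t < x * y)
    (ht' : t' < x * y) (hx : x ∣ t) (hx' : x ∣ t') (hy : y ∣ t + 2) (hy' : y ∣ t' + 2) :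
    t = t' := by
  have hmodx : t ≡ t' [MOD x] := hx.modEq_zero_nat.trans hx'.modEq_zero_nat.symm
  have hmody : t ≡ t' [MOD y] :=
    Nat.ModEq.add_right_cancel' 2 (hy.modEq_zero_nat.trans hy'.modEq_zero_nat.symm)
  exact ((Nat.modEq_and_modEq_iff_modEq_mul hc).1 ⟨hmodx, hmody⟩).eq_of_lt_of_lt ht ht'

theorem exists_dvd_and_dvd_add_two {x y : ℕ} (hc : x.Coprime y) (hx : x ≠ 0) (hy : y ≠ 0) :
    ∃ t < x * y, x ∣ t ∧ y ∣ t + 2 := by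
  -- The residue `2 * (y - 1)` is `-2` modulo `y`.
  obtain ⟨hmodx, hmody⟩ := (Nat.chineseRemainder hc 0 (2 * (y - 1))).2
  refine ⟨_, Nat.chineseRemainder_lt_mul hc 0 _ hx hy, Nat.modEq_zero_iff_dvd.1 hmodx, ?_⟩
  have hneg : 2 * (y - 1) + 2 = y * 2 := by omega
  exact Nat.modEq_zero_iff_dvd.1
    ((hmody.add_right 2).trans (hneg ▸ (Nat.dvd_mul_right y 2).modEq_zero_nat))

theorem card_sqrtsOfOne_eq_card_coprimeFactorizations {w : ℕ} (hw : Odd w) :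
    #(sqrtsOfOne w) = #(coprimeFactorizations w) := by
  have hgcd {t : ℕ} (h : w ∣ t * (t + 2)) : w.gcd t * w.gcd (t + 2) = w :=
    gcd_mul_gcd_of_dvd_mul h (coprime_gcd_gcd_add_two hw t)
  refine card_bij (fun z _ ↦ (w.gcd (z - 1), w.gcd (z + 1))) ?_ ?_ ?_
  · intro z hz
    obtain ⟨t, -, hdvd, rfl⟩ := mem_sqrtsOfOne_iff_exists_succ.1 hz
    exact mem_coprimeFactorizations.2 ⟨⟨hgcd hdvd, hw.pos.ne'⟩, coprime_gcd_gcd_add_two hw t⟩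
  · intro z hz z' hz' heq
    obtain ⟨t, hlt, hdvd, rfl⟩ := mem_sqrtsOfOne_iff_exists_succ.1 hz
    obtain ⟨t', hlt', -, rfl⟩ := mem_sqrtsOfOne_iff_exists_succ.1 hz'
    obtain ⟨hx, hy⟩ : w.gcd t = w.gcd t' ∧ w.gcd (t + 2) = w.gcd (t' + 2) := Prod.mk.inj heq
    rw [← hgcd hdvd] at hlt hlt'
    rw [eq_of_dvd_of_dvd_add_two (coprime_gcd_gcd_add_two hw t) hlt hlt'
      (Nat.gcd_dvd_right _ _) (hx ▸ Nat.gcd_dvd_right _ _)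
      (Nat.gcd_dvd_right _ _) (hy ▸ Nat.gcd_dvd_right _ _)]
  · rintro ⟨x, y⟩ hp
    obtain ⟨⟨rfl, hxy⟩, hc⟩ := mem_coprimeFactorizations.1 hp
    obtain ⟨hx, hy⟩ := mul_ne_zero_iff.1 hxy
    obtain ⟨t, hlt, hxt, hyt⟩ := exists_dvd_and_dvd_add_two hc hx hy
    obtain ⟨hgx, hgy⟩ := gcd_eq_of_dvd_of_dvd_add_two hw hxt hyt
    exact ⟨t + 1, mem_sqrtsOfOne_iff_exists_succ.2 ⟨t, hlt, mul_dvd_mul hxt hyt, rfl⟩,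
      Prod.ext hgx hgy⟩

theorem card_filter_lcm_eq_mul {a : ℕ} (ha : a ≠ 0) (w : ℕ) :
    #{p ∈ (a ^ 2 * w).divisorsAntidiagonal | p.1.lcm p.2 = a * w} =
      #(coprimeFactorizations w) := by
  symm
  refine card_bij (fun p _ ↦ (a * p.1, a * p.2)) ?_ ?_ ?_
  · rintro ⟨x, y⟩ hp
    obtain ⟨⟨rfl, hw⟩, hc⟩ := mem_coprimeFactorizations.1 hp
    rw [mem_filter, Nat.mem_divisorsAntidiagonal, Nat.lcm_mul_left, hc.lcm_eq_mul]
    exact ⟨⟨by ring, by positivity⟩, rfl⟩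
  · rintro ⟨x, y⟩ - ⟨x', y'⟩ - heq
    simpa [ha] using heq
  · rintro ⟨d, e⟩ hp
    obtain ⟨hmem, hlcm⟩ := mem_filter.1 hp
    obtain ⟨hde, hne⟩ := Nat.mem_divisorsAntidiagonal.1 hmem
    dsimp only at hde hlcm
    have hw : w ≠ 0 := right_ne_zero_of_mul hne
    have hgcd : d.gcd e = a := by
      refine Nat.eq_of_mul_eq_mul_right (Nat.pos_of_ne_zero (mul_ne_zero ha hw)) ?_
      rw [← hlcm, Nat.gcd_mul_lcm, hde, hlcm]
      ring
    obtain ⟨x, y, hc, hd, he⟩ := Nat.exists_coprime d e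
    rw [hgcd, mul_comm] at hd he
    refine ⟨(x, y), mem_coprimeFactorizations.2 ⟨⟨?_, hw⟩, hc⟩, by rw [hd, he]⟩
    refine Nat.eq_of_mul_eq_mul_left (by positivity : 0 < a ^ 2) ?_
    rw [← hde, hd, he]
    ring

theorem exists_eq_sq_mul_of_mem_sqMultipleDivisors {N v : ℕ} (hv : v ∈ sqMultipleDivisors N) :
    ∃ a w, a ≠ 0 ∧ v = a * w ∧ N = a ^ 2 * w ∧ v ^ 2 / N = w := by
  obtain ⟨⟨⟨a, rfl⟩, hne⟩, hdvd⟩ := mem_sqMultipleDivisors.1 hv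
  obtain ⟨hv0, ha⟩ := mul_ne_zero_iff.1 hne
  rw [sq] at hdvd
  obtain ⟨w, rfl⟩ := Nat.dvd_of_mul_dvd_mul_left (Nat.pos_of_ne_zero hv0) hdvd
  exact ⟨a, w, ha, rfl, by ring,
    Nat.div_eq_of_eq_mul_right (Nat.pos_of_ne_zero hne) (by ring)⟩

theorem lcm_mem_sqMultipleDivisors {N : ℕ} {p : ℕ × ℕ} (hp : p ∈ N.divisorsAntidiagonal) :
    p.1.lcm p.2 ∈ sqMultipleDivisors N := by
  obtain ⟨rfl, hne⟩ := Nat.mem_divisorsAntidiagonal.1 hp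
  refine mem_sqMultipleDivisors.2 ⟨⟨Nat.lcm_dvd_mul _ _, hne⟩, ?_⟩
  rw [sq]
  exact mul_dvd_mul (Nat.dvd_lcm_left _ _) (Nat.dvd_lcm_right _ _)

theorem card_divisors_eq_sum_card_coprimeFactorizations (N : ℕ) :
    #N.divisors = ∑ v ∈ sqMultipleDivisors N, #(coprimeFactorizations (v ^ 2 / N)) := by
  have hcard : #N.divisors = #N.divisorsAntidiagonal := by
    rw [← Nat.map_div_right_divisors, card_map]
  rw [hcard, card_eq_sum_card_fiberwise fun p hp ↦ lcm_mem_sqMultipleDivisors hp]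
  refine sum_congr rfl fun v hv ↦ ?_
  obtain ⟨a, w, ha, rfl, rfl, hw⟩ := exists_eq_sq_mul_of_mem_sqMultipleDivisors hv
  rw [hw, card_filter_lcm_eq_mul ha]

theorem sum_card_sqrtsOfOne_eq_card_divisors {N : ℕ} (hN : Odd N) :
    ∑ v ∈ sqMultipleDivisors N, #(sqrtsOfOne (v ^ 2 / N)) = #N.divisors := by
  rw [card_divisors_eq_sum_card_coprimeFactorizations]
  refine sum_congr rfl fun v hv ↦
    card_sqrtsOfOne_eq_card_coprimeFactorizations ?_
  obtain ⟨a, w, -, -, rfl, hw⟩ := exists_eq_sq_mul_of_mem_sqMultipleDivisors hv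
  rw [hw]
  exact Nat.Odd.of_mul_right hN

theorem card_quadruples_eq_sum_card_sqrtsOfOne (N : ℕ) :
    Nat.card {t : ℕ × ℕ × ℕ × ℕ //
        1 ≤ t.1 ∧ t.1 ≤ N ∧ t.1 ∣ N ∧ N ∣ t.1 ^ 2 ∧
        1 ≤ t.2.1 ∧ t.2.1 ≤ t.1 ^ 2 / N ∧ (t.1 ^ 2 / N) ∣ (t.2.1 ^ 2 - 1) ∧
        t.2.2.1 ≤ 1 ∧ t.2.2.2 ≤ 1} =
      4 * ∑ v ∈ sqMultipleDivisors N, #(sqrtsOfOne (v ^ 2 / N)) := by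
  let s : Finset (Σ _ : ℕ, ℕ × ℕ × ℕ) :=
    (sqMultipleDivisors N).sigma fun v ↦ sqrtsOfOne (v ^ 2 / N) ×ˢ range 2 ×ˢ range 2
  rw [Nat.subtype_card (s.map (Equiv.sigmaEquivProd ℕ (ℕ × ℕ × ℕ)).toEmbedding), card_map,
    card_sigma, mul_sum]
  · simp [mul_comm]
  · rintro ⟨v, z, n, m⟩
    simp only [s, mem_map_equiv, Equiv.sigmaEquivProd_symm_apply, mem_sigma, mem_product,
      mem_sqMultipleDivisors_iff_le, mem_sqrtsOfOne, and_assoc, mem_range, Order.lt_two_iff]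

theorem card_divisors_two_mul {N : ℕ} (hN : Odd N) : #(2 * N).divisors = 2 * #N.divisors := by
  rw [hN.coprime_two_left.card_divisors_mul, Nat.prime_two.divisors, card_pair (by decide)]

theorem count_M40_general (k : ℕ) (hk : 4 ∣ k) :
    Nat.card {t : ℕ × ℕ × ℕ × ℕ //
        1 ≤ t.1 ∧ t.1 ≤ (k + 2) / 2 ∧ 2 * t.1 ∣ (k + 2) ∧ (k + 2) ∣ 2 * t.1 ^ 2 ∧
        1 ≤ t.2.1 ∧ t.2.1 ≤ 2 * t.1 ^ 2 / (k + 2) ∧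
        (2 * t.1 ^ 2 / (k + 2)) ∣ (t.2.1 ^ 2 - 1) ∧
        t.2.2.1 ≤ 1 ∧ t.2.2.2 ≤ 1}
      = 2 * (k + 2).divisors.card := by
  obtain ⟨j, rfl⟩ := hk
  have hN : Odd (2 * j + 1) := odd_two_mul_add_one j
  rw [show 4 * j + 2 = 2 * (2 * j + 1) by ring, card_divisors_two_mul hN]
  simp only [Nat.mul_dvd_mul_iff_left two_pos, Nat.mul_div_mul_left _ _ two_pos,
    Nat.mul_div_cancel_left _ two_pos]
  rw [card_quadruples_eq_sum_card_sqrtsOfOne, sum_card_sqrtsOfOne_eq_card_divisors hN]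
  ring

/-- for `8 ∣ k+4`, the number of quadruples `(v,z,n,m)` parametrising the
physical invariants `M^{4,0}[v,z,n,m]` equals `2·d(k̄)`. -/
theorem count_M40 (k : ℕ) (hk : 8 ∣ k + 4) (hk0 : 0 < k) :
    Nat.card {t : ℕ × ℕ × ℕ × ℕ //
        1 ≤ t.1 ∧ t.1 ≤ (k + 2) / 2 ∧ 2 * t.1 ∣ (k + 2) ∧ (k + 2) ∣ 2 * t.1 ^ 2 ∧
        1 ≤ t.2.1 ∧ t.2.1 ≤ 2 * t.1 ^ 2 / (k + 2) ∧
        (2 * t.1 ^ 2 / (k + 2)) ∣ (t.2.1 ^ 2 - 1) ∧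
        t.2.2.1 ≤ 1 ∧ t.2.2.2 ≤ 1}
      = 2 * (k + 2).divisors.card :=
  count_M40_general k (by omega)
end
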